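/- (Poincaré–Bertrand identity for the boundary Hilbert transform and Laplace double layer.) For every infinitely differentiable L-periodic f : ℝ → ℝ and every t ∈ ℝ: (i) the principal value H f(t) := lim_{ε→0⁺} ∫_{ε ≤ |u| ≤ L/2} [(γ(t) − γ(t+u))·τ(t+u)]/(π‖γ(t) − γ(t+u)‖²) · f(t+u) du exists, and the resulting function H f is continuous and L-periodic; (ii) the principal value H(H f)(t), defined by the same formula with f replaced by H f, exists; and (iii) (1/4)·H(H f)(t) = −(1/4)·f(t) + D(D f)(t), where for a bounded measurable L-periodic g, D g(t) := ∫₀^L [(γ(t) − γ(s))·n(s)]/(2π‖γ(t) − γ(s)‖²) · g(s) ds (the integrand, defined for s not congruent to t mod L, is bounded). -/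

import Mathlib

open Real Filter Topology MeasureTheory

noncomputable section

/-- Euclidean dot product on `ℝ × ℝ`. -/
def dot2 (v w : ℝ × ℝ) : ℝ := v.1 * w.1 + v.2 * w.2

/-- Unit tangent vector `τ(s) = γ′(s)`. -/
def tang (γ : ℝ → ℝ × ℝ) (s : ℝ) : ℝ × ℝ := deriv γ s

/-- Unit normal vector `n(s) = (τ₂(s), −τ₁(s))`. -/
def nor (γ : ℝ → ℝ × ℝ) (s : ℝ) : ℝ × ℝ := ((deriv γ s).2, -(deriv γ s).1)

/-- Signed curvature `κ(s) = −γ″(s)·n(s)`. -/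
def curv (γ : ℝ → ℝ × ℝ) (s : ℝ) : ℝ := -(dot2 (deriv (deriv γ) s) (nor γ s))

/-- The Laplace double layer operator
`D g(t) = ∫₀^L (γ(t)−γ(s))·n(s) / (2π‖γ(t)−γ(s)‖²) · g(s) ds`. -/
def Dop (γ : ℝ → ℝ × ℝ) (L : ℝ) (g : ℝ → ℝ) (t : ℝ) : ℝ :=
  ∫ s in (0 : ℝ)..L,
    dot2 (γ t - γ s) (nor γ s) / (2 * π * dot2 (γ t - γ s) (γ t - γ s)) * g s

/-!
Identify the plane with `ℂ` and let `Z` be the curve. The Cauchy kernel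
`k(t, r) = Z'(r) / (Z t - Z r)` has real part `π` times the kernel of `H` and imaginary part `2π`
times the kernel of `D`, so for a real function `f` the identity is the real part of `C² f = -π² f`,
where `C f(t) = p.v. ∫ k(t, r) f(r) dr`. Write `C f = T f + κ f` with the absolutely convergent
integral `T f(t) = ∫ k(t, r) (f r - f t) dr` and with `κ(t) = p.v. ∫ k(t, r) dr`.

* `κ` is constant and `κ² = -π²`: the truncated integral is a variation of `-log (Z - Z t)` along
  the curve, which gives `exp (-κ) = -1`, so the continuous `κ` takes values in a discrete set. At a
  point where the curve lies on one side of its tangent, `|Im κ| ≤ π`, so `κ = ± π i` there.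
* `T² f = -2κ T f`: put `δ_t f(s) = (f s - f t) / (Z s - Z t)`. Partial fractions turn
  `(T f s - T f t) / (Z s - Z t)` into `T (δ_t f) (s)`, the antisymmetry of
  `dZ(s) dZ(r) / (Z s - Z r)` gives `∫ T G dZ = -2κ ∫ G dZ`, and `∫ δ_t f dZ = -T f(t)`.

Hence `C² = T² + 2κT + κ² = -π²`.
-/

open scoped NNReal

section MeanSlope

variable {E : Type*} [NormedAddCommGroup E] [NormedSpace ℝ E]

/-- The mean of `f'` over the segment from `t` to `t + u`. For a `C¹` function this is the slope of
`f` between its endpoints, extended continuously to `u = 0`. -/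
def meanSlope (f : ℝ → E) (t u : ℝ) : E := ∫ θ in (0 : ℝ)..1, deriv f (t + θ * u)

variable {f : ℝ → E} {K : ℝ≥0}

theorem smul_meanSlope [CompleteSpace E] (hf : ContDiff ℝ 1 f) (t u : ℝ) :
    u • meanSlope f t u = f (t + u) - f t := by
  have := hf.continuous_deriv le_rfl
  exact intervalIntegral.integral_unitInterval_deriv_eq_sub (by fun_prop)
    fun θ _ => (hf.differentiable one_ne_zero (t + θ • u)).hasDerivAt

theorem mul_abs_sub_le_norm_sub [CompleteSpace E] (hf : ContDiff ℝ 1 f) {c s r : ℝ}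
    (hc : c ≤ ‖meanSlope f r (s - r)‖) : c * |s - r| ≤ ‖f s - f r‖ := by
  have hslope := smul_meanSlope hf r (s - r)
  rw [add_sub_cancel] at hslope
  rw [← hslope, norm_smul, mul_comm, norm_eq_abs]
  gcongr

theorem continuous_meanSlope (hf : ContDiff ℝ 1 f) :
    Continuous fun p : ℝ × ℝ => meanSlope f p.1 p.2 := by
  have := hf.continuous_deriv le_rfl
  exact intervalIntegral.continuous_parametric_intervalIntegral_of_continuous' (by fun_prop) 0 1

theorem meanSlope_zero (f : ℝ → E) (t : ℝ) [CompleteSpace E] : meanSlope f t 0 = deriv f t := by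
  simp [meanSlope]

theorem norm_meanSlope_le {B : ℝ} (hB : ∀ s, ‖deriv f s‖ ≤ B) (t u : ℝ) :
    ‖meanSlope f t u‖ ≤ B := by
  simpa [meanSlope] using
    intervalIntegral.norm_integral_le_of_norm_le_const (a := 0) (b := 1)
      fun θ _ => hB (t + θ * u)

theorem lipschitzWith_meanSlope (hK : LipschitzWith K (deriv f)) (t : ℝ) :
    LipschitzWith K (meanSlope f t) := by
  have hc := hK.continuous
  refine LipschitzWith.of_dist_le_mul fun u v => ?_
  rw [dist_eq_norm, Real.dist_eq, meanSlope, meanSlope, ← intervalIntegral.integral_sub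
    (Continuous.intervalIntegrable (by fun_prop) _ _)
    (Continuous.intervalIntegrable (by fun_prop) _ _)]
  refine (intervalIntegral.norm_integral_le_of_norm_le_const (C := K * |u - v|)
    fun θ hθ => ?_).trans_eq (by simp)
  rw [Set.uIoc_of_le zero_le_one] at hθ
  calc ‖deriv f (t + θ * u) - deriv f (t + θ * v)‖ ≤ K * (θ * |u - v|) := by
        refine (hK.norm_sub_le _ _).trans_eq ?_
        rw [add_sub_add_left_eq_sub, ← mul_sub, norm_mul, norm_of_nonneg hθ.1.le, norm_eq_abs]
    _ ≤ K * |u - v| := by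
        gcongr
        exact mul_le_of_le_one_left (abs_nonneg _) hθ.2

theorem norm_deriv_sub_meanSlope_le [CompleteSpace E] (hK : LipschitzWith K (deriv f)) (t u : ℝ) :
    ‖deriv f (t + u) - meanSlope f t u‖ ≤ K * |u| := by
  have hc := hK.continuous
  have hmean : deriv f (t + u) - meanSlope f t u
      = ∫ θ in (0 : ℝ)..1, (deriv f (t + u) - deriv f (t + θ * u)) := by
    rw [intervalIntegral.integral_sub (by simp)
      (Continuous.intervalIntegrable (by fun_prop) _ _)]
    simp [meanSlope]
  rw [hmean]
  refine (intervalIntegral.norm_integral_le_of_norm_le_const (C := K * |u|)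
    fun θ hθ => ?_).trans_eq (by simp)
  rw [Set.uIoc_of_le zero_le_one] at hθ
  calc ‖deriv f (t + u) - deriv f (t + θ * u)‖ ≤ K * ((1 - θ) * |u|) := by
        refine (hK.norm_sub_le _ _).trans_eq ?_
        rw [add_sub_add_left_eq_sub, ← one_sub_mul, norm_mul, norm_of_nonneg (by linarith [hθ.2]),
          norm_eq_abs]
    _ ≤ K * |u| := by
        gcongr
        exact mul_le_of_le_one_left (abs_nonneg _) (by linarith [hθ.1])

end MeanSlope

section Periodic

variable {E F : Type*} [NormedAddCommGroup E] {L : ℝ}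

theorem exists_norm_le_of_periodic {g : ℝ → E} (hL : L ≠ 0) (hper : Function.Periodic g L)
    (hg : Continuous g) : ∃ B : ℝ≥0, ∀ s, ‖g s‖ ≤ B := by
  obtain ⟨B, hB⟩ := (hper.isBounded_of_continuous hL hg).exists_norm_le
  exact ⟨B.toNNReal, fun s => (hB _ (Set.mem_range_self s)).trans (le_coe_toNNReal B)⟩

variable [NormedSpace ℝ E] [NormedAddCommGroup F] [NormedSpace ℝ F] {f : ℝ → E}

theorem periodic_deriv (hper : Function.Periodic f L) : Function.Periodic (deriv f) L := fun s => by
  rw [← deriv_comp_add_const, hper.funext]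

theorem periodic_meanSlope (hper : Function.Periodic f L) (u : ℝ) :
    Function.Periodic (fun t => meanSlope f t u) L := fun t => by
  simp only [meanSlope, add_right_comm t L, periodic_deriv hper _]

/-- Functions of class `C^{1,1}` on the circle `ℝ / Lℤ`, viewed as `L`-periodic functions
on `ℝ`. -/
structure IsPeriodicC11 (L : ℝ) (f : ℝ → E) : Prop where
  contDiff : ContDiff ℝ 1 f
  exists_lipschitzWith_deriv : ∃ K, LipschitzWith K (deriv f)
  periodic : Function.Periodic f L

namespace IsPeriodicC11

theorem of_contDiff (hL : L ≠ 0) (hf : ContDiff ℝ 2 f) (hper : Function.Periodic f L) :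
    IsPeriodicC11 L f := by
  have hf' : ContDiff ℝ 1 (deriv f) := (contDiff_succ_iff_deriv (n := 1).1 hf).2.2
  obtain ⟨K, hK⟩ := exists_norm_le_of_periodic hL (periodic_deriv (periodic_deriv hper))
    (hf'.continuous_deriv le_rfl)
  exact ⟨hf.of_le one_le_two,
    ⟨K, lipschitzWith_of_nnnorm_deriv_le (hf'.differentiable one_ne_zero) hK⟩, hper⟩

theorem differentiable (hf : IsPeriodicC11 L f) : Differentiable ℝ f :=
  hf.contDiff.differentiable one_ne_zero

theorem continuous_deriv (hf : IsPeriodicC11 L f) : Continuous (deriv f) :=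
  hf.contDiff.continuous_deriv le_rfl

theorem exists_norm_deriv_le (hf : IsPeriodicC11 L f) (hL : L ≠ 0) :
    ∃ B : ℝ≥0, ∀ s, ‖deriv f s‖ ≤ B :=
  exists_norm_le_of_periodic hL (periodic_deriv hf.periodic) hf.continuous_deriv

theorem clm_comp (hf : IsPeriodicC11 L f) (A : E →L[ℝ] F) : IsPeriodicC11 L fun s => A (f s) where
  contDiff := A.contDiff.comp hf.contDiff
  exists_lipschitzWith_deriv := by
    obtain ⟨K, hK⟩ := hf.exists_lipschitzWith_deriv
    have hderiv : deriv (fun s => A (f s)) = A ∘ deriv f :=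
      funext fun s => (A.hasFDerivAt.comp_hasDerivAt s (hf.differentiable s).hasDerivAt).deriv
    exact ⟨_, hderiv ▸ A.lipschitz.comp hK⟩
  periodic := hf.periodic.comp A

end IsPeriodicC11

theorem integral_half_period_add {φ : ℝ → E} (hφ : Function.Periodic φ L) (t : ℝ) :
    ∫ u in -(L / 2)..L / 2, φ (t + u) = ∫ r in (0 : ℝ)..L, φ r := by
  have hshift := hφ.intervalIntegral_add_eq (t + -(L / 2)) 0
  rwa [show t + -(L / 2) + L = t + L / 2 by ring, zero_add,
    ← intervalIntegral.integral_comp_add_left] at hshift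

end Periodic

section PrincipalValue

variable {E F : Type*} [NormedAddCommGroup E] [NormedAddCommGroup F] {a ε : ℝ} {φ ψ : ℝ → E}

/-- The interval `[-a, a]` with the gap `(-ε, ε)` around the origin removed. -/
def symmTrunc (a ε : ℝ) : Set ℝ := {u | ε ≤ |u| ∧ |u| ≤ a}

theorem measurableSet_symmTrunc (a ε : ℝ) : MeasurableSet (symmTrunc a ε) :=
  continuous_abs.measurable (measurableSet_Icc : MeasurableSet (Set.Icc ε a))

theorem symmTrunc_subset (a ε : ℝ) : symmTrunc a ε ⊆ Set.Icc (-a) a := fun _ hu =>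
  abs_le.1 hu.2

theorem symmTrunc_eq_union (hε : 0 ≤ ε) :
    symmTrunc a ε = Set.Icc (-a) (-ε) ∪ Set.Icc ε a := by
  ext u
  simp only [symmTrunc, Set.mem_ofPred_eq, Set.mem_union, Set.mem_Icc, le_abs, abs_le]
  constructor
  · rintro ⟨h | h, h₁, h₂⟩
    · exact Or.inr ⟨h, h₂⟩
    · exact Or.inl ⟨h₁, by linarith⟩
  · rintro (⟨h₁, h₂⟩ | ⟨h₁, h₂⟩)
    · exact ⟨Or.inr (by linarith), h₁, by linarith⟩
    · exact ⟨Or.inl h₁, by linarith, h₂⟩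

theorem integrableOn_symmTrunc_inv (a : ℝ) (hε : 0 < ε) :
    IntegrableOn (fun u : ℝ => (u : ℂ)⁻¹) (symmTrunc a ε) := by
  refine IntegrableOn.of_bound ((measure_mono (symmTrunc_subset a ε)).trans_lt
    isCompact_Icc.measure_lt_top) (by fun_prop) ε⁻¹ ?_
  refine ae_restrict_of_forall_mem (measurableSet_symmTrunc a ε) fun u hu => ?_
  rw [norm_inv, Complex.norm_real]
  exact inv_anti₀ hε hu.1

variable [NormedSpace ℝ E] [NormedSpace ℝ F]

theorem setIntegral_symmTrunc (hε : 0 < ε) (hεa : ε ≤ a) (hφ : IntegrableOn φ (symmTrunc a ε)) :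
    ∫ u in symmTrunc a ε, φ u = (∫ u in -a..-ε, φ u) + ∫ u in ε..a, φ u := by
  rw [symmTrunc_eq_union hε.le] at hφ ⊢
  have hdisj : Disjoint (Set.Icc (-a) (-ε)) (Set.Icc ε a) :=
    Set.disjoint_left.2 fun u h₁ h₂ => by linarith [h₁.2, h₂.1]
  rw [setIntegral_union hdisj measurableSet_Icc hφ.left_of_union hφ.right_of_union,
    integral_Icc_eq_integral_Ioc, integral_Icc_eq_integral_Ioc,
    intervalIntegral.integral_of_le (by linarith), intervalIntegral.integral_of_le hεa]

theorem setIntegral_symmTrunc_comp_neg (φ : ℝ → E) (a ε : ℝ) :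
    ∫ u in symmTrunc a ε, φ (-u) = ∫ u in symmTrunc a ε, φ u := by
  have hpre : (fun u : ℝ => -u) ⁻¹' symmTrunc a ε = symmTrunc a ε := by
    ext u
    simp [symmTrunc]
  conv_lhs => rw [← hpre]
  exact (Measure.measurePreserving_neg volume).setIntegral_preimage_emb
    (MeasurableEquiv.neg ℝ).measurableEmbedding φ _

/-- `y` is the principal value at the origin of the integral of `φ` over `[-a, a]`. Integrability
away from the origin is required explicitly, because a divergent Bochner integral is `0`. -/
def HasPrincipalValue (φ : ℝ → E) (a : ℝ) (y : E) : Prop :=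
  (∀ ε > 0, IntegrableOn φ (symmTrunc a ε)) ∧
    Tendsto (fun ε => ∫ u in symmTrunc a ε, φ u) (𝓝[>] 0) (𝓝 y)

theorem hasPrincipalValue_inv (a : ℝ) : HasPrincipalValue (fun u : ℝ => (u : ℂ)⁻¹) a 0 := by
  refine ⟨fun ε hε => integrableOn_symmTrunc_inv a hε, ?_⟩
  refine tendsto_const_nhds.congr fun ε => ?_
  have hodd := setIntegral_symmTrunc_comp_neg (fun u : ℝ => (u : ℂ)⁻¹) a ε
  simp only [Complex.ofReal_neg, inv_neg, integral_neg] at hodd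
  exact (self_eq_neg.1 hodd.symm).symm

namespace HasPrincipalValue

variable {x y : E}

theorem of_intervalIntegrable (ha : 0 ≤ a) (hφ : IntervalIntegrable φ volume (-a) a) :
    HasPrincipalValue φ a (∫ u in -a..a, φ u) := by
  have hφ' : IntegrableOn φ (Set.Icc (-a) a) :=
    (intervalIntegrable_iff_integrableOn_Icc_of_le (by linarith)).1 hφ
  refine ⟨fun ε _ => hφ'.mono_set (symmTrunc_subset a ε), ?_⟩
  have hcover : AECover (volume.restrict (Set.Icc (-a) a)) (𝓝[>] 0) (symmTrunc a) := by
    refine ⟨?_, fun ε => measurableSet_symmTrunc a ε⟩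
    filter_upwards [ae_restrict_mem measurableSet_Icc,
      ae_restrict_of_ae (Measure.ae_ne volume 0)] with u hua hu
    filter_upwards [Ioo_mem_nhdsGT (abs_pos.2 hu)] with ε hε
    exact ⟨hε.2.le, abs_le.2 hua⟩
  rw [intervalIntegral.integral_of_le (by linarith), ← integral_Icc_eq_integral_Ioc]
  refine (hcover.integral_tendsto_of_countably_generated hφ').congr fun ε => ?_
  rw [Measure.restrict_restrict (measurableSet_symmTrunc a ε),
    Set.inter_eq_left.2 (symmTrunc_subset a ε)]

theorem add (hφ : HasPrincipalValue φ a x) (hψ : HasPrincipalValue ψ a y) :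
    HasPrincipalValue (fun u => φ u + ψ u) a (x + y) := by
  refine ⟨fun ε hε => (hφ.1 ε hε).add (hψ.1 ε hε), (hφ.2.add hψ.2).congr' ?_⟩
  filter_upwards [self_mem_nhdsWithin] with ε hε
  exact (integral_add (hφ.1 ε hε) (hψ.1 ε hε)).symm

theorem clm_comp [CompleteSpace E] [CompleteSpace F] (hφ : HasPrincipalValue φ a x)
    (A : E →L[ℝ] F) : HasPrincipalValue (fun u => A (φ u)) a (A x) := by
  refine ⟨fun ε hε => A.integrable_comp (hφ.1 ε hε),
    ((A.continuous.tendsto x).comp hφ.2).congr' ?_⟩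
  filter_upwards [self_mem_nhdsWithin] with ε hε
  exact (A.integral_comp_comm (hφ.1 ε hε)).symm

theorem const_mul {A : Type*} [NormedRing A] [NormedAlgebra ℝ A] [CompleteSpace A] {φ : ℝ → A}
    {x : A} (hφ : HasPrincipalValue φ a x) (c : A) :
    HasPrincipalValue (fun u => c * φ u) a (c * x) :=
  hφ.clm_comp (ContinuousLinearMap.mul ℝ A c)

theorem unique (hx : HasPrincipalValue φ a x) (hy : HasPrincipalValue φ a y) : x = y :=
  tendsto_nhds_unique hx.2 hy.2

end HasPrincipalValue

end PrincipalValue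

section LipschitzOver

variable {α E F : Type*} [NormedAddCommGroup E] [NormedAddCommGroup F] {Z : α → E} {G H : α → F}
  {M N : ℝ≥0}

/-- `G` is Lipschitz with constant `M` as a function of `Z`, i.e. with respect to the pseudometric
induced by `Z`. When `Z` parametrizes a curve, this says that `G` descends to a Lipschitz function
on the curve. -/
def LipschitzOver (M : ℝ≥0) (Z : α → E) (G : α → F) : Prop :=
  ∀ s r, ‖G s - G r‖ ≤ M * ‖Z s - Z r‖

namespace LipschitzOver

theorem continuous [TopologicalSpace α] (hG : LipschitzOver M Z G) (hZ : Continuous Z) :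
    Continuous G := by
  refine continuous_iff_continuousAt.2 fun r => tendsto_iff_norm_sub_tendsto_zero.2 ?_
  refine squeeze_zero (fun _ => norm_nonneg _) (fun s => hG s r) ?_
  simpa using ((tendsto_iff_norm_sub_tendsto_zero.1 (hZ.tendsto r)).const_mul (M : ℝ))

theorem eq_of_eq (hG : LipschitzOver M Z G) {s r : α} (h : Z s = Z r) : G s = G r := by
  simpa [h, sub_eq_zero] using hG s r

theorem periodic [Add α] (hG : LipschitzOver M Z G) {L : α} (hZ : Function.Periodic Z L) :
    Function.Periodic G L := fun s => hG.eq_of_eq (hZ s)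

theorem add (hG : LipschitzOver M Z G) (hH : LipschitzOver N Z H) :
    LipschitzOver (M + N) Z fun s => G s + H s := fun s r => by
  calc ‖G s + H s - (G r + H r)‖ ≤ ‖G s - G r‖ + ‖H s - H r‖ := by
        rw [add_sub_add_comm]
        exact norm_add_le _ _
    _ ≤ (M + N) * ‖Z s - Z r‖ := by
        rw [add_mul]
        exact add_le_add (hG s r) (hH s r)

theorem const_mul {R : Type*} [NormedRing R] {G : α → R} (hG : LipschitzOver M Z G) (c : R) :
    LipschitzOver (‖c‖₊ * M) Z fun s => c * G s := fun s r => by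
  rw [← mul_sub, NNReal.coe_mul, coe_nnnorm, mul_assoc]
  exact (norm_mul_le _ _).trans (mul_le_mul_of_nonneg_left (hG s r) (norm_nonneg c))

end LipschitzOver

end LipschitzOver

theorem lipschitzOnWith_div {α 𝕜 : Type*} [PseudoMetricSpace α] [NormedField 𝕜] {f g : α → 𝕜}
    {s : Set α} {Kf Kg B c : ℝ≥0} (hf : LipschitzOnWith Kf f s) (hg : LipschitzOnWith Kg g s)
    (hfB : ∀ x ∈ s, ‖f x‖ ≤ B) (hc : 0 < c) (hgc : ∀ x ∈ s, c ≤ ‖g x‖) :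
    LipschitzOnWith (Kf / c + B * Kg / c ^ 2) (fun x => f x / g x) s := by
  refine LipschitzOnWith.of_dist_le_mul fun x hx y hy => ?_
  have hc' : (0 : ℝ) < c := hc
  have hgx : g x ≠ 0 := norm_pos_iff.1 (hc'.trans_le (hgc x hx))
  have hgy : g y ≠ 0 := norm_pos_iff.1 (hc'.trans_le (hgc y hy))
  have hsplit : f x / g x - f y / g y
      = (f x - f y) / g x + f y * (g y - g x) / (g x * g y) := by
    field_simp
    ring
  have hfxy := hf.dist_le_mul x hx y hy
  have hgxy := hg.dist_le_mul y hy x hx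
  rw [dist_eq_norm] at hfxy hgxy
  calc dist (f x / g x) (f y / g y)
      ≤ ‖f x - f y‖ / ‖g x‖ + ‖f y‖ * ‖g y - g x‖ / (‖g x‖ * ‖g y‖) := by
        rw [dist_eq_norm, hsplit, ← norm_mul, ← norm_mul, ← norm_div, ← norm_div]
        exact norm_add_le _ _
    _ ≤ Kf * dist x y / c + B * (Kg * dist y x) / (c * c) := by
        gcongr
        exacts [hgc x hx, hfB y hy, hgc x hx, hgc y hy]
    _ = (Kf / c + B * Kg / c ^ 2 : ℝ≥0) * dist x y := by
        push_cast
        rw [dist_comm y x]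
        ring

section JordanCurve

variable {L : ℝ} {Z : ℝ → ℂ}

theorem exists_close_of_periodic {α : Type*} {F : ℝ → α} (hF : Function.Periodic F L) (hL : 0 < L)
    (t s r : ℝ) : ∃ s' ∈ Set.Icc (t - 3 * L / 4) (t + 3 * L / 4),
      ∃ r' ∈ Set.Icc (t - 3 * L / 4) (t + 3 * L / 4),
        |s' - r'| ≤ L / 2 ∧ F s' = F s ∧ F r' = F r := by
  obtain ⟨s₁, hs₁, hFs⟩ := hF.exists_mem_Ico hL s (r - L / 2)
  have hpair : Function.Periodic (fun m => (F (m + (s₁ - r) / 2), F (m - (s₁ - r) / 2))) L :=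
    fun m => by simp only [add_right_comm m L, add_sub_right_comm m L, hF _]
  obtain ⟨m, hm, hFm⟩ := hpair.exists_mem_Ico hL ((s₁ + r) / 2) (t - L / 2)
  simp only [Prod.mk.injEq, show (s₁ + r) / 2 + (s₁ - r) / 2 = s₁ by ring,
    show (s₁ + r) / 2 - (s₁ - r) / 2 = r by ring] at hFm
  obtain ⟨h₁, h₂⟩ := hs₁
  obtain ⟨h₃, h₄⟩ := hm
  refine ⟨m + (s₁ - r) / 2, ⟨by linarith, by linarith⟩, m - (s₁ - r) / 2,
    ⟨by linarith, by linarith⟩, abs_le.2 ⟨by linarith, by linarith⟩, ?_, ?_⟩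
  · rw [hFs, hFm.1]
  · exact hFm.2.symm

/-- An `L`-periodic regular parametrization, of class `C^{1,1}`, of a Jordan curve in the complex
plane. -/
structure IsRegularJordanCurve (L : ℝ) (Z : ℝ → ℂ) : Prop extends IsPeriodicC11 L Z where
  pos : 0 < L
  deriv_ne_zero : ∀ s, deriv Z s ≠ 0
  injOn : Set.InjOn Z (Set.Ico 0 L)

namespace IsRegularJordanCurve

theorem continuous (hZ : IsRegularJordanCurve L Z) : Continuous Z := hZ.contDiff.continuous

theorem ne_of_abs_sub_lt (hZ : IsRegularJordanCurve L Z) {s r : ℝ} (hsr : s ≠ r)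
    (hlt : |s - r| < L) : Z s ≠ Z r := by
  intro heq
  have hmod : toIcoMod hZ.pos 0 s = toIcoMod hZ.pos 0 r := by
    refine hZ.injOn (by simpa using toIcoMod_mem_Ico hZ.pos 0 s)
      (by simpa using toIcoMod_mem_Ico hZ.pos 0 r) ?_
    simp only [toIcoMod, hZ.periodic.sub_zsmul_eq, heq]
  obtain ⟨n, hn⟩ := (toIcoMod_eq_toIcoMod hZ.pos).1 hmod
  rw [abs_sub_comm, hn, zsmul_eq_mul, abs_mul, abs_of_pos hZ.pos,
    mul_lt_iff_lt_one_left hZ.pos] at hlt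
  have hn₀ : n = 0 := Int.abs_lt_one_iff.1 (by exact_mod_cast hlt)
  rw [hn₀, zero_smul, sub_eq_zero] at hn
  exact hsr hn.symm

theorem exists_le_norm_meanSlope (hZ : IsRegularJordanCurve L Z) :
    ∃ c : ℝ≥0, 0 < c ∧ ∀ t u, |u| ≤ 3 * L / 4 → c ≤ ‖meanSlope Z t u‖ := by
  have hL := hZ.pos
  obtain ⟨p, hp, hmin⟩ :=
    (isCompact_Icc.prod isCompact_Icc : IsCompact
      (Set.Icc (0 : ℝ) L ×ˢ Set.Icc (-(3 * L / 4)) (3 * L / 4))).exists_isMinOn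
      ⟨(0, 0), ⟨⟨le_rfl, hL.le⟩, ⟨by linarith, by linarith⟩⟩⟩
      (continuous_meanSlope hZ.contDiff).norm.continuousOn
  refine ⟨‖meanSlope Z p.1 p.2‖₊, ?_, fun t u hu => ?_⟩
  · rw [nnnorm_pos]
    intro hzero
    by_cases hp₂ : p.2 = 0
    · rw [hp₂, meanSlope_zero] at hzero
      exact hZ.deriv_ne_zero _ hzero
    · have hchord := smul_meanSlope hZ.contDiff p.1 p.2
      rw [hzero, smul_zero, eq_comm, sub_eq_zero] at hchord
      refine hZ.ne_of_abs_sub_lt (by simpa using hp₂) ?_ hchord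
      rw [add_sub_cancel_left]
      linarith [abs_le.2 hp.2]
  · obtain ⟨t₀, ht₀, heq⟩ := (periodic_meanSlope hZ.periodic u).exists_mem_Ico₀ hL t
    rw [heq]
    exact isMinOn_iff.1 hmin (t₀, u) ⟨⟨ht₀.1, ht₀.2.le⟩, abs_le.1 hu⟩

theorem exists_lipschitzOver_of_lipschitzOnWith (hZ : IsRegularJordanCurve L Z) :
    ∃ C : ℝ≥0, ∀ (G : ℝ → ℂ) (K : ℝ≥0) (t : ℝ), Function.Periodic G L →
      LipschitzOnWith K G (Set.Icc (t - 3 * L / 4) (t + 3 * L / 4)) →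
      LipschitzOver (K * C) Z G := by
  obtain ⟨c, hc, hcZ⟩ := hZ.exists_le_norm_meanSlope
  refine ⟨c⁻¹, fun G K t hper hlip s r => ?_⟩
  have hpair : Function.Periodic (fun x => (G x, Z x)) L := fun x => by
    simp only [hper x, hZ.periodic x]
  obtain ⟨s', hs', r', hr', hsr, hs, hr⟩ := exists_close_of_periodic hpair hZ.pos t s r
  simp only [Prod.mk.injEq] at hs hr
  rw [← hs.1, ← hs.2, ← hr.1, ← hr.2]
  have hchord : c * |s' - r'| ≤ ‖Z s' - Z r'‖ :=
    mul_abs_sub_le_norm_sub hZ.contDiff (hcZ _ _ (by linarith [hZ.pos]))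
  calc ‖G s' - G r'‖ ≤ K * |s' - r'| := by
        simpa only [dist_eq_norm, norm_eq_abs] using hlip.dist_le_mul s' hs' r' hr'
    _ ≤ K * (c⁻¹ * ‖Z s' - Z r'‖) := by
        gcongr
        rwa [NNReal.coe_inv, le_inv_mul_iff₀ (by exact_mod_cast hc)]
    _ = (K * c⁻¹ : ℝ≥0) * ‖Z s' - Z r'‖ := by
        push_cast
        ring

theorem ae_ne (hZ : IsRegularJordanCurve L Z) (t : ℝ) :
    ∀ᵐ r ∂volume.restrict (Set.uIoc 0 L), Z r ≠ Z t := by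
  obtain ⟨t₀, ht₀, heq⟩ := hZ.periodic.exists_mem_Ico₀ hZ.pos t
  filter_upwards [ae_restrict_mem measurableSet_uIoc,
    ae_restrict_of_ae (Measure.ae_ne volume L),
    ae_restrict_of_ae (Measure.ae_ne volume t₀)] with r hr hrL hrt
  rw [Set.uIoc_of_le hZ.pos.le] at hr
  rw [heq]
  exact fun h => hrt (hZ.injOn ⟨hr.1.le, hr.2.lt_of_ne hrL⟩ ht₀ h)

end IsRegularJordanCurve

theorem IsPeriodicC11.exists_lipschitzOver {f : ℝ → ℂ} (hf : IsPeriodicC11 L f)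
    (hZ : IsRegularJordanCurve L Z) : ∃ M, LipschitzOver M Z f := by
  obtain ⟨C, hC⟩ := hZ.exists_lipschitzOver_of_lipschitzOnWith
  obtain ⟨B, hB⟩ := hf.exists_norm_deriv_le hZ.pos.ne'
  exact ⟨_, hC f B 0 hf.periodic
    (lipschitzWith_of_nnnorm_deriv_le hf.differentiable hB).lipschitzOnWith⟩

/-- The divided difference `(f s - f t) / (Z s - Z t)` of `f` with respect to the curve `Z`,
completed on the diagonal by the derivative of `f` along the curve. -/
def dividedDiff (Z f : ℝ → ℂ) (t s : ℝ) : ℂ :=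
  if Z s = Z t then deriv f t / deriv Z t else (f s - f t) / (Z s - Z t)

variable {f : ℝ → ℂ}

theorem sub_mul_dividedDiff {M : ℝ≥0} (hf : LipschitzOver M Z f) (t s : ℝ) :
    (Z s - Z t) * dividedDiff Z f t s = f s - f t := by
  unfold dividedDiff
  split_ifs with h
  · rw [h, hf.eq_of_eq h, sub_self, sub_self, zero_mul]
  · exact mul_div_cancel₀ _ (sub_ne_zero.2 h)

theorem dividedDiff_add (hZ : IsRegularJordanCurve L Z) (hf : IsPeriodicC11 L f) (t : ℝ) {u : ℝ}
    (hu : |u| < L) : dividedDiff Z f t (t + u) = meanSlope f t u / meanSlope Z t u := by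
  rcases eq_or_ne u 0 with rfl | hu₀
  · simp [dividedDiff, meanSlope_zero]
  · have hne : Z (t + u) ≠ Z t := hZ.ne_of_abs_sub_lt (by simpa using hu₀) (by simpa using hu)
    rw [dividedDiff, if_neg hne, ← smul_meanSlope hf.contDiff, ← smul_meanSlope hZ.contDiff,
      Complex.real_smul, Complex.real_smul, mul_div_mul_left _ _ (by exact_mod_cast hu₀)]

theorem exists_lipschitzOver_dividedDiff (hZ : IsRegularJordanCurve L Z)
    (hf : IsPeriodicC11 L f) : ∃ M, ∀ t, LipschitzOver M Z (dividedDiff Z f t) := by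
  have hL := hZ.pos
  obtain ⟨c, hc, hcZ⟩ := hZ.exists_le_norm_meanSlope
  obtain ⟨C, hC⟩ := hZ.exists_lipschitzOver_of_lipschitzOnWith
  obtain ⟨B, hB⟩ := hf.exists_norm_deriv_le hL.ne'
  obtain ⟨Kf, hKf⟩ := hf.exists_lipschitzWith_deriv
  obtain ⟨KZ, hKZ⟩ := hZ.exists_lipschitzWith_deriv
  refine ⟨_, fun t => hC _ (Kf / c + B * KZ / c ^ 2) t (fun s => ?_) ?_⟩
  · simp only [dividedDiff, hZ.periodic s, hf.periodic s]
  have hslope : LipschitzOnWith (Kf / c + B * KZ / c ^ 2)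
      (fun u => meanSlope f t u / meanSlope Z t u) (Set.Icc (-(3 * L / 4)) (3 * L / 4)) :=
    lipschitzOnWith_div (lipschitzWith_meanSlope hKf t).lipschitzOnWith
      (lipschitzWith_meanSlope hKZ t).lipschitzOnWith (fun u _ => norm_meanSlope_le hB t u) hc
      fun u hu => hcZ t u (abs_le.2 hu)
  have hwindow {s : ℝ} (hs : s ∈ Set.Icc (t - 3 * L / 4) (t + 3 * L / 4)) :
      s - t ∈ Set.Icc (-(3 * L / 4)) (3 * L / 4) := ⟨by linarith [hs.1], by linarith [hs.2]⟩
  have heq {s : ℝ} (hs : s ∈ Set.Icc (t - 3 * L / 4) (t + 3 * L / 4)) :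
      dividedDiff Z f t s = meanSlope f t (s - t) / meanSlope Z t (s - t) := by
    rw [← dividedDiff_add hZ hf t (by linarith [abs_le.2 (hwindow hs)]), add_sub_cancel]
  refine LipschitzOnWith.of_dist_le_mul fun s hs r hr => ?_
  rw [heq hs, heq hr, ← dist_sub_right s r t]
  exact hslope.dist_le_mul _ (hwindow hs) _ (hwindow hr)

end JordanCurve

section LogDeriv

variable {w : ℝ → ℂ} {a b : ℝ}

theorem continuousOn_logDeriv (hw : ContDiff ℝ 1 w) :
    ContinuousOn (logDeriv w) {u | w u ≠ 0} :=
  (hw.continuous_deriv le_rfl).continuousOn.div hw.continuous.continuousOn fun _ hu => hu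

theorem exp_integral_logDeriv (hab : a ≤ b) (hw : ContDiff ℝ 1 w)
    (hw₀ : ∀ u ∈ Set.Icc a b, w u ≠ 0) :
    Complex.exp (∫ u in a..b, logDeriv w u) = w b / w a := by
  have hopen : IsOpen {u | w u ≠ 0} := isOpen_ne_fun hw.continuous continuous_const
  have hcont := continuousOn_logDeriv hw
  have hprim : ∀ x ∈ Set.Icc a b,
      HasDerivAt (fun x => ∫ u in a..x, logDeriv w u) (logDeriv w x) x := fun x hx => by
    refine intervalIntegral.integral_hasDerivAt_right (ContinuousOn.intervalIntegrable
      (hcont.mono fun u hu => hw₀ u ?_)) (hcont.stronglyMeasurableAtFilter hopen x (hw₀ x hx))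
      (hcont.continuousAt (hopen.mem_nhds (hw₀ x hx)))
    rw [Set.uIcc_of_le hx.1] at hu
    exact ⟨hu.1, hu.2.trans hx.2⟩
  have hderiv : ∀ x ∈ Set.Icc a b,
      HasDerivAt (fun x => w x * Complex.exp (-∫ u in a..x, logDeriv w u)) 0 x := fun x hx => by
    refine ((hw.differentiable one_ne_zero x).hasDerivAt.mul
      (hprim x hx).neg.cexp).congr_deriv ?_
    have hwx := hw₀ x hx
    rw [logDeriv_apply]
    field_simp
    ring
  have hconst := constant_of_has_deriv_right_zero
    (fun x hx => (hderiv x hx).continuousAt.continuousWithinAt)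
    (fun x hx => (hderiv x ⟨hx.1, hx.2.le⟩).hasDerivWithinAt) b ⟨hab, le_rfl⟩
  simp only [intervalIntegral.integral_same, neg_zero, Complex.exp_zero, mul_one,
    Complex.exp_neg] at hconst
  have hwb := hw₀ b ⟨hab, le_rfl⟩
  rw [← hconst]
  field_simp

theorem integral_logDeriv_eq_sub_log (hw : ContDiff ℝ 1 w)
    (hslit : ∀ u ∈ Set.uIcc a b, w u ∈ Complex.slitPlane) :
    ∫ u in a..b, logDeriv w u = Complex.log (w b) - Complex.log (w a) :=
  intervalIntegral.integral_eq_sub_of_hasDerivAt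
    (fun u hu => (hw.differentiable one_ne_zero u).hasDerivAt.clog_real (hslit u hu))
    ((continuousOn_logDeriv hw).mono
      fun u hu => Complex.slitPlane_ne_zero (hslit u hu)).intervalIntegrable

end LogDeriv

section CauchyKernel

variable {L : ℝ} {Z : ℝ → ℂ}

/-- The density `Z'(r) / (Z(t) - Z(r))` of the Cauchy kernel of the curve `Z` with respect to the
parameter `r`. Its value on the diagonal is `0`. -/
def cauchyKernel (Z : ℝ → ℂ) (t r : ℝ) : ℂ := deriv Z r / (Z t - Z r)

/-- The Cauchy kernel at `r = t + u` with its singular part `-1 / u` removed. -/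
def cauchyRemainder (Z : ℝ → ℂ) (t u : ℝ) : ℂ := cauchyKernel Z t (t + u) + (u : ℂ)⁻¹

/-- The integral of the remainder of the Cauchy kernel over one period; equivalently, the principal
value of the integral of the Cauchy kernel. -/
def cauchyPV (Z : ℝ → ℂ) (L t : ℝ) : ℂ := ∫ u in -(L / 2)..L / 2, cauchyRemainder Z t u

theorem cauchyKernel_eq_remainder_sub_inv (Z : ℝ → ℂ) (t u : ℝ) :
    cauchyKernel Z t (t + u) = cauchyRemainder Z t u - (u : ℂ)⁻¹ :=
  (add_sub_cancel_right _ _).symm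

theorem periodic_cauchyKernel (hZ : Function.Periodic Z L) (t : ℝ) :
    Function.Periodic (cauchyKernel Z t) L := fun r => by
  rw [cauchyKernel, hZ, periodic_deriv hZ, cauchyKernel]

theorem measurable_cauchyKernel (hZ : Continuous Z) :
    Measurable fun p : ℝ × ℝ => cauchyKernel Z p.1 p.2 :=
  ((measurable_deriv Z).comp measurable_snd).div
    ((hZ.measurable.comp measurable_fst).sub (hZ.measurable.comp measurable_snd))

theorem measurable_cauchyRemainder (hZ : Continuous Z) :
    Measurable fun p : ℝ × ℝ => cauchyRemainder Z p.1 p.2 := by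
  have hk := measurable_cauchyKernel hZ
  unfold cauchyRemainder
  fun_prop

namespace IsRegularJordanCurve

theorem exists_norm_cauchyRemainder_le (hZ : IsRegularJordanCurve L Z) :
    ∃ B : ℝ≥0, ∀ t u, |u| ≤ L / 2 → ‖cauchyRemainder Z t u‖ ≤ B := by
  have hL := hZ.pos
  obtain ⟨c, hc, hcZ⟩ := hZ.exists_le_norm_meanSlope
  obtain ⟨K, hK⟩ := hZ.exists_lipschitzWith_deriv
  have hc' : (0 : ℝ) < c := hc
  refine ⟨K / c, fun t u hu => ?_⟩
  rcases eq_or_ne u 0 with rfl | hu₀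
  · simpa [cauchyRemainder, cauchyKernel] using (K / c).coe_nonneg
  have hcu : c ≤ ‖meanSlope Z t u‖ := hcZ t u (by linarith)
  have hslope : meanSlope Z t u ≠ 0 := norm_pos_iff.1 (hc'.trans_le hcu)
  have hu' : (u : ℂ) ≠ 0 := by exact_mod_cast hu₀
  have hrem : cauchyRemainder Z t u
      = (meanSlope Z t u - deriv Z (t + u)) / (u * meanSlope Z t u) := by
    rw [cauchyRemainder, cauchyKernel, ← neg_sub, ← smul_meanSlope hZ.contDiff, Complex.real_smul]
    field_simp
    ring
  calc ‖cauchyRemainder Z t u‖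
      = ‖deriv Z (t + u) - meanSlope Z t u‖ / (|u| * ‖meanSlope Z t u‖) := by
        rw [hrem, norm_div, norm_sub_rev, norm_mul, Complex.norm_real, norm_eq_abs]
    _ ≤ K * |u| / (|u| * c) := by
        gcongr
        exact norm_deriv_sub_meanSlope_le hK t u
    _ = (K / c : ℝ≥0) := by
        have := abs_pos.2 hu₀
        push_cast
        field_simp

theorem intervalIntegrable_cauchyRemainder (hZ : IsRegularJordanCurve L Z) (t : ℝ) :
    IntervalIntegrable (cauchyRemainder Z t) volume (-(L / 2)) (L / 2) := by
  obtain ⟨B, hB⟩ := hZ.exists_norm_cauchyRemainder_le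
  refine intervalIntegrable_const (c := (B : ℝ)) |>.mono_fun
    ((measurable_cauchyRemainder hZ.continuous).comp measurable_prodMk_left).aestronglyMeasurable ?_
  refine ae_restrict_of_forall_mem measurableSet_uIoc fun u hu => ?_
  rw [Set.uIoc_of_le (by linarith [hZ.pos])] at hu
  simpa using hB t u (abs_le.2 ⟨hu.1.le, hu.2⟩)

theorem hasPrincipalValue_cauchyKernel (hZ : IsRegularJordanCurve L Z) (t : ℝ) :
    HasPrincipalValue (fun u => cauchyKernel Z t (t + u)) (L / 2) (cauchyPV Z L t) := by
  have hpv := (HasPrincipalValue.of_intervalIntegrable (by linarith [hZ.pos])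
    (hZ.intervalIntegrable_cauchyRemainder t)).add ((hasPrincipalValue_inv (L / 2)).const_mul (-1))
  simpa only [cauchyPV, cauchyKernel_eq_remainder_sub_inv, sub_eq_add_neg, neg_one_mul, mul_zero,
    add_zero] using hpv

theorem continuous_cauchyKernel_add (hZ : IsRegularJordanCurve L Z) {u : ℝ} (hu₀ : u ≠ 0)
    (hu : |u| < L) : Continuous fun t => cauchyKernel Z t (t + u) := by
  have hZc := hZ.continuous
  have hZ'c := hZ.continuous_deriv
  exact Continuous.div (by fun_prop) (by fun_prop) fun t =>
    sub_ne_zero.2 (hZ.ne_of_abs_sub_lt (by simpa using hu₀) (by simpa using hu))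

theorem continuous_cauchyPV (hZ : IsRegularJordanCurve L Z) :
    Continuous (cauchyPV Z L) := by
  have hL := hZ.pos
  obtain ⟨B, hB⟩ := hZ.exists_norm_cauchyRemainder_le
  have habs {u : ℝ} (hu : u ∈ Set.uIoc (-(L / 2)) (L / 2)) : |u| ≤ L / 2 := by
    rw [Set.uIoc_of_le (by linarith)] at hu
    exact abs_le.2 ⟨hu.1.le, hu.2⟩
  refine intervalIntegral.continuous_of_dominated_interval (bound := fun _ => B)
    (fun t => ((measurable_cauchyRemainder hZ.continuous).comp
      measurable_prodMk_left).aestronglyMeasurable)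
    (fun t => ae_of_all _ fun u hu => hB t u (habs hu)) intervalIntegrable_const ?_
  filter_upwards [Measure.ae_ne volume 0] with u hu₀ hu
  exact (hZ.continuous_cauchyKernel_add hu₀ (by linarith [habs hu])).add continuous_const

end IsRegularJordanCurve

end CauchyKernel

section Winding

variable {L : ℝ} {Z : ℝ → ℂ}

/-- The chord of the curve `Z` from the parameter `t` to the parameter `t + u`. -/
def chord (Z : ℝ → ℂ) (t u : ℝ) : ℂ := Z (t + u) - Z t

theorem contDiff_chord (hZ : ContDiff ℝ 1 Z) (t : ℝ) : ContDiff ℝ 1 (chord Z t) :=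
  (hZ.comp (contDiff_const.add contDiff_id)).sub contDiff_const

theorem cauchyKernel_eq_neg_logDeriv_chord (Z : ℝ → ℂ) (t u : ℝ) :
    cauchyKernel Z t (t + u) = -logDeriv (chord Z t) u := by
  have hderiv : deriv (chord Z t) u = deriv Z (t + u) := by
    unfold chord
    rw [deriv_sub_const, deriv_comp_const_add]
  rw [cauchyKernel, logDeriv_apply, hderiv, chord, ← div_neg, neg_sub]

theorem chord_neg_half (hper : Function.Periodic Z L) (t : ℝ) :
    chord Z t (-(L / 2)) = chord Z t (L / 2) := by
  rw [chord, chord, ← hper (t + -(L / 2)), show t + -(L / 2) + L = t + L / 2 by ring]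

theorem exists_chord_im_nonneg (hZ : Continuous Z) (hper : Function.Periodic Z L)
    (hL : 0 < L) : ∃ t, ∀ u, 0 ≤ (chord Z t u).im := by
  obtain ⟨t, -, hmin⟩ := (isCompact_Icc (a := 0) (b := L)).exists_isMinOn
    ⟨0, Set.left_mem_Icc.2 hL.le⟩ (f := fun s => (Z s).im) (by fun_prop)
  refine ⟨t, fun u => ?_⟩
  obtain ⟨s, hs, heq⟩ := hper.exists_mem_Ico₀ hL (t + u)
  rw [chord, heq, Complex.sub_im, sub_nonneg]
  exact hmin (Set.Ico_subset_Icc_self hs)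

namespace IsRegularJordanCurve

theorem chord_ne_zero (hZ : IsRegularJordanCurve L Z) (t : ℝ) {u : ℝ} (hu₀ : u ≠ 0)
    (hu : |u| < L) : chord Z t u ≠ 0 :=
  sub_ne_zero.2 (hZ.ne_of_abs_sub_lt (by simpa using hu₀) (by simpa using hu))

theorem setIntegral_cauchyKernel (hZ : IsRegularJordanCurve L Z) (t : ℝ) {ε : ℝ} (hε : 0 < ε)
    (hεL : ε ≤ L / 2) :
    ∫ u in symmTrunc (L / 2) ε, cauchyKernel Z t (t + u)
      = -((∫ u in -(L / 2)..-ε, logDeriv (chord Z t) u)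
        + ∫ u in ε..L / 2, logDeriv (chord Z t) u) := by
  rw [setIntegral_symmTrunc hε hεL ((hZ.hasPrincipalValue_cauchyKernel t).1 ε hε)]
  simp only [cauchyKernel_eq_neg_logDeriv_chord, intervalIntegral.integral_neg]
  ring

theorem exp_neg_setIntegral_cauchyKernel (hZ : IsRegularJordanCurve L Z) (t : ℝ) {ε : ℝ}
    (hε : 0 < ε) (hεL : ε ≤ L / 2) :
    Complex.exp (-∫ u in symmTrunc (L / 2) ε, cauchyKernel Z t (t + u))
      = chord Z t (-ε) / chord Z t ε := by
  have hL := hZ.pos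
  have hw := contDiff_chord hZ.contDiff t
  have hhalf : chord Z t (L / 2) ≠ 0 :=
    hZ.chord_ne_zero t (by positivity) (by rw [abs_of_pos (by positivity)]; linarith)
  rw [hZ.setIntegral_cauchyKernel t hε hεL, neg_neg, Complex.exp_add,
    exp_integral_logDeriv (by linarith) hw fun u hu => hZ.chord_ne_zero t
      (by linarith [hu.2]) (by rw [abs_lt]; constructor <;> linarith [hu.1, hu.2]),
    exp_integral_logDeriv hεL hw fun u hu => hZ.chord_ne_zero t
      (by linarith [hu.1]) (by rw [abs_lt]; constructor <;> linarith [hu.1, hu.2]),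
    chord_neg_half hZ.periodic, div_mul_div_cancel₀ hhalf]

theorem tendsto_chord_div_chord (hZ : IsRegularJordanCurve L Z) (t : ℝ) :
    Tendsto (fun ε => chord Z t (-ε) / chord Z t ε) (𝓝[>] 0) (𝓝 (-1)) := by
  have hslope : Continuous (meanSlope Z t) :=
    (continuous_meanSlope hZ.contDiff).comp (Continuous.prodMk_right t)
  have hlim : Tendsto (fun ε => -(meanSlope Z t (-ε) / meanSlope Z t ε)) (𝓝 0)
      (𝓝 (-(meanSlope Z t (-0) / meanSlope Z t 0))) :=
    (((hslope.comp continuous_neg).tendsto 0).div (hslope.tendsto 0)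
      (by simpa only [meanSlope_zero] using hZ.deriv_ne_zero t)).neg
  rw [neg_zero, meanSlope_zero, div_self (hZ.deriv_ne_zero t)] at hlim
  refine (hlim.mono_left nhdsWithin_le_nhds).congr' ?_
  filter_upwards [self_mem_nhdsWithin] with ε (hε : 0 < ε)
  have hε' : (ε : ℂ) ≠ 0 := by exact_mod_cast hε.ne'
  rw [chord, chord, ← smul_meanSlope hZ.contDiff, ← smul_meanSlope hZ.contDiff, Complex.real_smul,
    Complex.real_smul, Complex.ofReal_neg, neg_mul, neg_div, mul_div_mul_left _ _ hε']

theorem exp_neg_cauchyPV (hZ : IsRegularJordanCurve L Z) (t : ℝ) :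
    Complex.exp (-cauchyPV Z L t) = -1 := by
  have hexp : Tendsto
      (fun ε => Complex.exp (-∫ u in symmTrunc (L / 2) ε, cauchyKernel Z t (t + u)))
      (𝓝[>] 0) (𝓝 (Complex.exp (-cauchyPV Z L t))) :=
    (Complex.continuous_exp.tendsto _).comp (hZ.hasPrincipalValue_cauchyKernel t).2.neg
  refine tendsto_nhds_unique (hexp.congr' ?_) (hZ.tendsto_chord_div_chord t)
  filter_upwards [Ioc_mem_nhdsGT (half_pos hZ.pos)] with ε hε
  exact hZ.exp_neg_setIntegral_cauchyKernel t hε.1 hε.2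

theorem cauchyPV_eq (hZ : IsRegularJordanCurve L Z) (t s : ℝ) :
    cauchyPV Z L t = cauchyPV Z L s := by
  refine neg_injective (Complex.isCoveringMap_exp.isSeparatedMap.const_of_comp
    Complex.isCoveringMap_exp.isLocalHomeomorph.isLocallyInjective
    hZ.continuous_cauchyPV.neg (fun t s => Subtype.ext ?_) t s)
  exact (hZ.exp_neg_cauchyPV t).trans (hZ.exp_neg_cauchyPV s).symm

theorem integral_logDeriv_chord (hZ : IsRegularJordanCurve L Z) {t : ℝ}
    (ht : ∀ u, 0 ≤ (chord Z t u).im) {a b : ℝ} (hab : a ≤ b)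
    (ha : -L < a) (hb : b < L) (h₀ : b < 0 ∨ 0 < a) :
    ∫ u in a..b, logDeriv (chord Z t) u
      = Complex.log (-Complex.I * chord Z t b) - Complex.log (-Complex.I * chord Z t a) := by
  rw [← integral_logDeriv_eq_sub_log (contDiff_const.mul (contDiff_chord hZ.contDiff t))]
  · simp only [logDeriv_const_mul _ _ (neg_ne_zero.2 Complex.I_ne_zero)]
  · intro u hu
    obtain ⟨hau, hub⟩ := Set.uIcc_of_le hab ▸ hu
    have hne : -Complex.I * chord Z t u ≠ 0 := mul_ne_zero (neg_ne_zero.2 Complex.I_ne_zero)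
      (hZ.chord_ne_zero t (by rcases h₀ with h | h <;> linarith)
        (abs_lt.2 ⟨by linarith, by linarith⟩))
    have hre : 0 ≤ (-Complex.I * chord Z t u).re := by simpa using ht u
    rw [Complex.mem_slitPlane_iff]
    by_contra! hcon
    exact hne (Complex.ext (le_antisymm hcon.1 hre) hcon.2)

theorem abs_im_setIntegral_cauchyKernel_le (hZ : IsRegularJordanCurve L Z) {t : ℝ}
    (ht : ∀ u, 0 ≤ (chord Z t u).im) {ε : ℝ} (hε : 0 < ε) (hεL : ε ≤ L / 2) :
    |(∫ u in symmTrunc (L / 2) ε, cauchyKernel Z t (t + u)).im| ≤ π := by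
  have := hZ.pos
  have harg : ∀ u, |(-Complex.I * chord Z t u).arg| ≤ π / 2 := fun u =>
    Complex.abs_arg_le_pi_div_two_iff.2 (by simpa using ht u)
  have him : (∫ u in symmTrunc (L / 2) ε, cauchyKernel Z t (t + u)).im
      = (-Complex.I * chord Z t ε).arg - (-Complex.I * chord Z t (-ε)).arg := by
    rw [hZ.setIntegral_cauchyKernel t hε hεL,
      hZ.integral_logDeriv_chord ht (by linarith) (by linarith) (by linarith)
        (.inl (by linarith)),
      hZ.integral_logDeriv_chord ht hεL (by linarith) (by linarith) (.inr hε),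
      chord_neg_half hZ.periodic]
    simp only [Complex.neg_im, Complex.add_im, Complex.sub_im, Complex.log_im]
    ring
  rw [him]
  exact (abs_sub _ _).trans (by linarith [harg ε, harg (-ε)])

theorem exists_abs_im_cauchyPV_le (hZ : IsRegularJordanCurve L Z) :
    ∃ t, |(cauchyPV Z L t).im| ≤ π := by
  obtain ⟨t, ht⟩ := exists_chord_im_nonneg hZ.continuous hZ.periodic hZ.pos
  refine ⟨t, le_of_tendsto ((Complex.continuous_im.tendsto _).comp
    (hZ.hasPrincipalValue_cauchyKernel t).2).abs ?_⟩
  filter_upwards [Ioc_mem_nhdsGT (half_pos hZ.pos)] with ε hε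
  exact hZ.abs_im_setIntegral_cauchyKernel_le ht hε.1 hε.2

theorem cauchyPV_sq (hZ : IsRegularJordanCurve L Z) (t : ℝ) :
    cauchyPV Z L t ^ 2 = -(π : ℂ) ^ 2 := by
  obtain ⟨t₀, ht₀⟩ := hZ.exists_abs_im_cauchyPV_le
  obtain ⟨n, hn⟩ := Complex.exp_eq_exp_iff_exists_int.1
    ((hZ.exp_neg_cauchyPV t₀).trans Complex.exp_pi_mul_I.symm)
  have hκ : cauchyPV Z L t₀ = -((2 * n + 1 : ℝ) * π : ℝ) * Complex.I := by
    rw [← neg_neg (cauchyPV Z L t₀), hn]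
    push_cast
    ring
  have hn₁ : |(2 * n + 1 : ℝ)| ≤ 1 := by
    rw [hκ] at ht₀
    simpa [abs_mul, abs_of_pos pi_pos, pi_pos] using ht₀
  have hn₂ : (2 * n + 1) ^ 2 = (1 : ℤ) := by
    have hle : |2 * n + 1| ≤ 1 := by exact_mod_cast hn₁
    obtain ⟨h₁, h₂⟩ := abs_le.1 hle
    obtain rfl | rfl : n = 0 ∨ n = -1 := by lia
    all_goals norm_num
  rw [hZ.cauchyPV_eq t t₀, hκ, mul_pow, Complex.I_sq, neg_sq, ← Complex.ofReal_pow, mul_pow,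
    show (2 * n + 1 : ℝ) ^ 2 = 1 by exact_mod_cast hn₂]
  push_cast
  ring

end IsRegularJordanCurve

end Winding

theorem integral_integral_swap_of_norm_le {E : Type*} [NormedAddCommGroup E] [NormedSpace ℝ E]
    {ψ : ℝ → ℝ → E} {a b c d C : ℝ}
    (hψ : AEStronglyMeasurable ψ.uncurry (volume.restrict (Set.uIoc a b ×ˢ Set.uIoc c d)))
    (hC : ∀ x ∈ Set.uIoc a b, ∀ y ∈ Set.uIoc c d, ‖ψ x y‖ ≤ C) :
    ∫ x in a..b, ∫ y in c..d, ψ x y = ∫ y in c..d, ∫ x in a..b, ψ x y := by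
  refine intervalIntegral_intervalIntegral_swap (IntegrableOn.of_bound ?_ hψ C
    (ae_restrict_of_forall_mem (measurableSet_uIoc.prod measurableSet_uIoc)
      fun p hp => hC _ hp.1 _ hp.2))
  exact ((Metric.isBounded_Ioc _ _).prod (Metric.isBounded_Ioc _ _)).measure_lt_top

section CauchyDiff

variable {L : ℝ} {Z f g : ℝ → ℂ} {B M N : ℝ≥0}

/-- The Cauchy integral of `f` along the curve `Z` with the value of `f` at the pole subtracted. -/
def cauchyDiff (Z : ℝ → ℂ) (L : ℝ) (f : ℝ → ℂ) (t : ℝ) : ℂ :=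
  ∫ r in (0 : ℝ)..L, cauchyKernel Z t r * (f r - f t)

theorem cauchyKernel_mul_sub_mul {t r : ℝ} (htr : Z r ≠ Z t) (w : ℂ) :
    cauchyKernel Z t r * ((Z r - Z t) * w) = -(w * deriv Z r) := by
  have hne : Z t - Z r ≠ 0 := sub_ne_zero.2 htr.symm
  rw [cauchyKernel]
  field_simp
  ring

theorem norm_cauchyKernel_mul_sub_le (hB : ∀ s, ‖deriv Z s‖ ≤ B) (hf : LipschitzOver M Z f)
    (t r : ℝ) : ‖cauchyKernel Z t r * (f r - f t)‖ ≤ B * M := by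
  rw [cauchyKernel, div_mul_eq_mul_div, mul_div_assoc, norm_mul, norm_div, norm_sub_rev (Z t)]
  gcongr
  exacts [hB r, div_le_of_le_mul₀ (norm_nonneg _) M.coe_nonneg (hf r t)]

theorem norm_cauchyDiff_le (hL : 0 ≤ L) (hB : ∀ s, ‖deriv Z s‖ ≤ B)
    (hf : LipschitzOver M Z f) (t : ℝ) : ‖cauchyDiff Z L f t‖ ≤ B * M * L := by
  simpa [cauchyDiff, abs_of_nonneg hL] using intervalIntegral.norm_integral_le_of_norm_le_const
    (a := 0) (b := L) fun r _ => norm_cauchyKernel_mul_sub_le hB hf t r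

theorem cauchyDiff_eq_integral_add (hZ : Function.Periodic Z L)
    (hf : Function.Periodic f L) (t : ℝ) :
    cauchyDiff Z L f t
      = ∫ u in -(L / 2)..L / 2, cauchyKernel Z t (t + u) * (f (t + u) - f t) := by
  refine (integral_half_period_add (φ := fun r => cauchyKernel Z t r * (f r - f t))
    (fun r => ?_) t).symm
  simp only [periodic_cauchyKernel hZ t r, hf r]

namespace IsRegularJordanCurve

theorem intervalIntegrable_cauchyKernel_mul_sub (hZ : IsRegularJordanCurve L Z)
    (hf : LipschitzOver M Z f) (t a b : ℝ) :
    IntervalIntegrable (fun r => cauchyKernel Z t r * (f r - f t)) volume a b := by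
  obtain ⟨B, hB⟩ := hZ.exists_norm_deriv_le hZ.pos.ne'
  have hmeas := (measurable_cauchyKernel hZ.continuous).comp (measurable_prodMk_left (x := t))
  have hfm := (hf.continuous hZ.continuous).measurable
  exact (intervalIntegrable_const (c := (B * M : ℝ))).mono_fun
    (hmeas.mul (hfm.sub_const (f t))).aestronglyMeasurable
    (ae_of_all _ fun r => (norm_cauchyKernel_mul_sub_le hB hf t r).trans (le_norm_self _))

theorem cauchyDiff_add_const_mul (hZ : IsRegularJordanCurve L Z) (hf : LipschitzOver M Z f)
    (hg : LipschitzOver N Z g) (c : ℂ) (t : ℝ) :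
    cauchyDiff Z L (fun s => f s + c * g s) t = cauchyDiff Z L f t + c * cauchyDiff Z L g t := by
  simp only [cauchyDiff]
  rw [← intervalIntegral.integral_const_mul, ← intervalIntegral.integral_add
    (hZ.intervalIntegrable_cauchyKernel_mul_sub hf t 0 L)
    ((hZ.intervalIntegrable_cauchyKernel_mul_sub hg t 0 L).const_mul c)]
  congr 1 with r
  ring

theorem hasPrincipalValue_cauchyKernel_mul (hZ : IsRegularJordanCurve L Z)
    (hf : LipschitzOver M Z f) (t : ℝ) :
    HasPrincipalValue (fun u => cauchyKernel Z t (t + u) * f (t + u)) (L / 2)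
      (cauchyDiff Z L f t + cauchyPV Z L t * f t) := by
  have hL := hZ.pos
  have hint : IntervalIntegrable (fun u => cauchyKernel Z t (t + u) * (f (t + u) - f t)) volume
      (-(L / 2)) (L / 2) := by
    simpa using (hZ.intervalIntegrable_cauchyKernel_mul_sub hf t (t + -(L / 2))
      (t + L / 2)).comp_add_left t
  have hpv := (HasPrincipalValue.of_intervalIntegrable (by positivity) hint).add
    ((hZ.hasPrincipalValue_cauchyKernel t).const_mul (f t))
  rw [← cauchyDiff_eq_integral_add hZ.periodic (hf.periodic hZ.periodic), mul_comm (f t)] at hpv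
  convert hpv using 2 with u
  ring

theorem integral_cauchyKernel_mul_sub_mul_deriv (hZ : IsRegularJordanCurve L Z)
    (hf : Continuous f) (hper : Function.Periodic f L) {u : ℝ} (hu₀ : u ≠ 0) (hu : |u| < L) :
    ∫ s in (0 : ℝ)..L, cauchyKernel Z s (s + u) * (f (s + u) - f s) * deriv Z s
      = -∫ s in (0 : ℝ)..L,
          (cauchyRemainder Z s u + cauchyRemainder Z s (-u)) * (f s * deriv Z s) := by
  have hZ' := hZ.continuous_deriv
  have hk := hZ.continuous_cauchyKernel_add hu₀ hu
  have hk' := hZ.continuous_cauchyKernel_add (neg_ne_zero.2 hu₀) (by rwa [abs_neg])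
  have hshift : ∫ s in (0 : ℝ)..L, cauchyKernel Z s (s + u) * f (s + u) * deriv Z s
      = -∫ s in (0 : ℝ)..L, cauchyKernel Z s (s + -u) * (f s * deriv Z s) := by
    have hφ : Function.Periodic (fun s => cauchyKernel Z s (s + -u) * (f s * deriv Z s)) L :=
      fun s => by simp only [cauchyKernel, add_right_comm s L, hZ.periodic _, hper _,
        periodic_deriv hZ.periodic _]
    have htranslate := intervalIntegral.integral_comp_add_right
      (fun s => cauchyKernel Z s (s + -u) * (f s * deriv Z s)) u (a := 0) (b := L)
    rw [zero_add, add_comm L, hφ.intervalIntegral_add_eq u 0, zero_add] at htranslate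
    rw [← htranslate, ← intervalIntegral.integral_neg]
    congr 1 with s
    rw [cauchyKernel, cauchyKernel, add_neg_cancel_right, ← neg_sub (Z s), div_neg]
    ring
  calc _ = (∫ s in (0 : ℝ)..L, cauchyKernel Z s (s + u) * f (s + u) * deriv Z s)
        - ∫ s in (0 : ℝ)..L, cauchyKernel Z s (s + u) * (f s * deriv Z s) := by
        rw [← intervalIntegral.integral_sub (Continuous.intervalIntegrable (by fun_prop) _ _)
          (Continuous.intervalIntegrable (by fun_prop) _ _)]
        congr 1 with s
        ring
    _ = _ := by
        rw [hshift, ← neg_add', ← intervalIntegral.integral_add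
          (Continuous.intervalIntegrable (by fun_prop) _ _)
          (Continuous.intervalIntegrable (by fun_prop) _ _)]
        congr 2 with s
        simp only [cauchyRemainder, Complex.ofReal_neg, inv_neg]
        ring

end IsRegularJordanCurve

end CauchyDiff

section CauchyTransform

variable {L : ℝ} {Z f g : ℝ → ℂ} {M N : ℝ≥0}

namespace IsRegularJordanCurve

theorem integral_cauchyDiff_mul (hZ : IsRegularJordanCurve L Z) (hf : LipschitzOver M Z f)
    (hg : Measurable g) (hN : ∀ s, ‖g s‖ ≤ N) :
    ∫ s in (0 : ℝ)..L, cauchyDiff Z L f s * g s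
      = ∫ u in -(L / 2)..L / 2, ∫ s in (0 : ℝ)..L,
          cauchyKernel Z s (s + u) * (f (s + u) - f s) * g s := by
  obtain ⟨B, hB⟩ := hZ.exists_norm_deriv_le hZ.pos.ne'
  have hfm : Measurable f := (hf.continuous hZ.continuous).measurable
  have hk := measurable_cauchyKernel hZ.continuous
  simp only [cauchyDiff_eq_integral_add hZ.periodic (hf.periodic hZ.periodic),
    ← intervalIntegral.integral_mul_const]
  refine integral_integral_swap_of_norm_le (C := B * M * N)
    (Measurable.aestronglyMeasurable (by fun_prop)) fun s _ u _ => ?_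
  rw [norm_mul]
  gcongr
  exacts [norm_cauchyKernel_mul_sub_le hB hf s (s + u), hN s]

theorem integral_cauchyPV_mul (hZ : IsRegularJordanCurve L Z) (hg : Measurable g)
    (hN : ∀ s, ‖g s‖ ≤ N) :
    2 * ∫ s in (0 : ℝ)..L, cauchyPV Z L s * g s
      = ∫ u in -(L / 2)..L / 2, ∫ s in (0 : ℝ)..L,
          (cauchyRemainder Z s u + cauchyRemainder Z s (-u)) * g s := by
  obtain ⟨R, hR⟩ := hZ.exists_norm_cauchyRemainder_le
  have hρ := measurable_cauchyRemainder hZ.continuous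
  have hPV (s : ℝ) : 2 * (cauchyPV Z L s * g s) = ∫ u in -(L / 2)..L / 2,
      (cauchyRemainder Z s u + cauchyRemainder Z s (-u)) * g s := by
    have hint := hZ.intervalIntegrable_cauchyRemainder s
    have hintNeg : IntervalIntegrable (fun u => cauchyRemainder Z s (-u)) volume
        (-(L / 2)) (L / 2) := by
      simpa using (IntervalIntegrable.iff_comp_neg (by simp)).1 hint.symm
    rw [intervalIntegral.integral_mul_const, intervalIntegral.integral_add hint hintNeg,
      intervalIntegral.integral_comp_neg, neg_neg, cauchyPV]
    ring
  rw [← intervalIntegral.integral_const_mul]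
  simp only [hPV]
  refine integral_integral_swap_of_norm_le (C := (R + R) * N)
    (Measurable.aestronglyMeasurable (by fun_prop)) fun s _ u hu => ?_
  rw [Set.uIoc_of_le (by linarith [hZ.pos])] at hu
  have hu' : |u| ≤ L / 2 := abs_le.2 ⟨hu.1.le, hu.2⟩
  rw [norm_mul]
  gcongr
  exacts [norm_add_le_of_le (hR s u hu') (hR s (-u) (by rwa [abs_neg])), hN s]

theorem integral_cauchyDiff_mul_deriv (hZ : IsRegularJordanCurve L Z) (hf : LipschitzOver M Z f) :
    ∫ s in (0 : ℝ)..L, cauchyDiff Z L f s * deriv Z s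
      = -2 * ∫ s in (0 : ℝ)..L, cauchyPV Z L s * (f s * deriv Z s) := by
  have hL := hZ.pos
  have hfc := hf.continuous hZ.continuous
  have hper := hf.periodic hZ.periodic
  have hfZ' : Continuous fun s => f s * deriv Z s := hfc.mul hZ.continuous_deriv
  obtain ⟨B, hB⟩ := hZ.exists_norm_deriv_le hL.ne'
  obtain ⟨S, hS⟩ := exists_norm_le_of_periodic hL.ne'
    (hper.mul (periodic_deriv hZ.periodic)) hfZ'
  rw [hZ.integral_cauchyDiff_mul hf (measurable_deriv Z) hB, neg_mul,
    hZ.integral_cauchyPV_mul hfZ'.measurable hS, ← intervalIntegral.integral_neg]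
  refine intervalIntegral.integral_congr_ae ?_
  filter_upwards [Measure.ae_ne volume 0] with u hu₀ hu
  rw [Set.uIoc_of_le (by linarith)] at hu
  exact hZ.integral_cauchyKernel_mul_sub_mul_deriv hfc hper hu₀
    (abs_lt.2 ⟨by linarith [hu.1], by linarith [hu.2]⟩)

theorem cauchyDiff_sub (hZ : IsRegularJordanCurve L Z) (hf : LipschitzOver M Z f)
    (s t : ℝ) :
    cauchyDiff Z L f s - cauchyDiff Z L f t
      = (Z s - Z t) * cauchyDiff Z L (dividedDiff Z f t) s := by
  simp only [cauchyDiff]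
  rw [← intervalIntegral.integral_sub (hZ.intervalIntegrable_cauchyKernel_mul_sub hf s 0 L)
    (hZ.intervalIntegrable_cauchyKernel_mul_sub hf t 0 L), ← intervalIntegral.integral_const_mul]
  refine intervalIntegral.integral_congr_ae_restrict ?_
  filter_upwards [hZ.ae_ne s, hZ.ae_ne t] with r hs ht
  have hfs : f r - f s = (Z r - Z s) * dividedDiff Z f t r
      + (Z s - Z t) * (dividedDiff Z f t r - dividedDiff Z f t s) := by
    rw [← sub_sub_sub_cancel_right _ _ (f t), ← sub_mul_dividedDiff hf t r,
      ← sub_mul_dividedDiff hf t s]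
    ring
  rw [hfs, mul_add, cauchyKernel_mul_sub_mul hs, ← sub_mul_dividedDiff hf t r,
    cauchyKernel_mul_sub_mul ht]
  ring

theorem exists_lipschitzOver_cauchyDiff (hZ : IsRegularJordanCurve L Z)
    (hf : IsPeriodicC11 L f) : ∃ M, LipschitzOver M Z (cauchyDiff Z L f) := by
  obtain ⟨B, hB⟩ := hZ.exists_norm_deriv_le hZ.pos.ne'
  obtain ⟨M, hM⟩ := hf.exists_lipschitzOver hZ
  obtain ⟨N, hN⟩ := exists_lipschitzOver_dividedDiff hZ hf
  refine ⟨B * N * L.toNNReal, fun s t => ?_⟩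
  rw [hZ.cauchyDiff_sub hM, norm_mul, mul_comm]
  gcongr
  simpa [hZ.pos.le] using norm_cauchyDiff_le hZ.pos.le hB (hN t) s

theorem integral_dividedDiff_mul_deriv (hZ : IsRegularJordanCurve L Z)
    (hf : LipschitzOver M Z f) (t : ℝ) :
    ∫ r in (0 : ℝ)..L, dividedDiff Z f t r * deriv Z r = -cauchyDiff Z L f t := by
  rw [cauchyDiff, ← intervalIntegral.integral_neg]
  refine intervalIntegral.integral_congr_ae_restrict ?_
  filter_upwards [hZ.ae_ne t] with r hr
  rw [← sub_mul_dividedDiff hf t r, cauchyKernel_mul_sub_mul hr, neg_neg]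

theorem cauchyDiff_cauchyDiff (hZ : IsRegularJordanCurve L Z) (hf : LipschitzOver M Z f) {t : ℝ}
    (hδ : LipschitzOver N Z (dividedDiff Z f t)) :
    cauchyDiff Z L (cauchyDiff Z L f) t = -2 * cauchyPV Z L t * cauchyDiff Z L f t := by
  calc cauchyDiff Z L (cauchyDiff Z L f) t
      = ∫ r in (0 : ℝ)..L, -(cauchyDiff Z L (dividedDiff Z f t) r * deriv Z r) := by
        refine intervalIntegral.integral_congr_ae_restrict ?_
        filter_upwards [hZ.ae_ne t] with r hr
        rw [hZ.cauchyDiff_sub hf, cauchyKernel_mul_sub_mul hr]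
    _ = 2 * ∫ r in (0 : ℝ)..L, cauchyPV Z L t * (dividedDiff Z f t r * deriv Z r) := by
        rw [intervalIntegral.integral_neg, hZ.integral_cauchyDiff_mul_deriv hδ]
        simp only [hZ.cauchyPV_eq _ t, neg_mul, neg_neg]
    _ = -2 * cauchyPV Z L t * cauchyDiff Z L f t := by
        rw [intervalIntegral.integral_const_mul, hZ.integral_dividedDiff_mul_deriv hf]
        ring

end IsRegularJordanCurve

/-- The Cauchy singular integral of `f` along the curve `Z`, that is, the principal value of
`∫ f(r) Z'(r) / (Z(t) - Z(r)) dr`. -/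
def cauchyTransform (Z : ℝ → ℂ) (L : ℝ) (f : ℝ → ℂ) (t : ℝ) : ℂ :=
  cauchyDiff Z L f t + cauchyPV Z L t * f t

namespace IsRegularJordanCurve

theorem exists_lipschitzOver_cauchyTransform (hZ : IsRegularJordanCurve L Z)
    (hf : IsPeriodicC11 L f) : ∃ M, LipschitzOver M Z (cauchyTransform Z L f) := by
  obtain ⟨M, hM⟩ := hf.exists_lipschitzOver hZ
  obtain ⟨N, hN⟩ := hZ.exists_lipschitzOver_cauchyDiff hf
  have hC : cauchyTransform Z L f = fun s => cauchyDiff Z L f s + cauchyPV Z L 0 * f s :=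
    funext fun s => by rw [cauchyTransform, hZ.cauchyPV_eq s 0]
  exact ⟨_, hC ▸ hN.add (hM.const_mul (cauchyPV Z L 0))⟩

theorem cauchyTransform_cauchyTransform (hZ : IsRegularJordanCurve L Z) (hf : IsPeriodicC11 L f)
    (t : ℝ) : cauchyTransform Z L (cauchyTransform Z L f) t = -(π : ℂ) ^ 2 * f t := by
  obtain ⟨M, hM⟩ := hf.exists_lipschitzOver hZ
  obtain ⟨N, hN⟩ := exists_lipschitzOver_dividedDiff hZ hf
  obtain ⟨K, hK⟩ := hZ.exists_lipschitzOver_cauchyDiff hf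
  have hC : cauchyTransform Z L f = fun s => cauchyDiff Z L f s + cauchyPV Z L t * f s :=
    funext fun s => by rw [cauchyTransform, hZ.cauchyPV_eq s t]
  rw [cauchyTransform, hC, hZ.cauchyDiff_add_const_mul hK hM, hZ.cauchyDiff_cauchyDiff hM (hN t),
    ← hZ.cauchyPV_sq t]
  ring

end IsRegularJordanCurve

end CauchyTransform

section RealParts

variable {L : ℝ} {Z f : ℝ → ℂ} {M : ℝ≥0}

namespace IsRegularJordanCurve

theorem hasPrincipalValue_im_cauchyKernel_mul (hZ : IsRegularJordanCurve L Z) {g : ℝ → ℝ}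
    (hg : Continuous g) (hper : Function.Periodic g L) (t : ℝ) :
    HasPrincipalValue (fun u => (cauchyKernel Z t (t + u)).im * g (t + u)) (L / 2)
      (∫ r in (0 : ℝ)..L, (cauchyKernel Z t r).im * g r) := by
  have him (u : ℝ) : (cauchyRemainder Z t u).im = (cauchyKernel Z t (t + u)).im := by
    simp [cauchyRemainder]
  have hint : IntervalIntegrable (fun u => (cauchyKernel Z t (t + u)).im * g (t + u)) volume
      (-(L / 2)) (L / 2) := by
    simp only [← him]
    refine IntervalIntegrable.mul_continuousOn ?_ (by fun_prop)
    have hrem := hZ.intervalIntegrable_cauchyRemainder t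
    exact ⟨Complex.imCLM.integrable_comp hrem.1, Complex.imCLM.integrable_comp hrem.2⟩
  rw [← integral_half_period_add (φ := fun r => (cauchyKernel Z t r).im * g r)
    (fun r => by simp only [periodic_cauchyKernel hZ.periodic t r, hper r]) t]
  exact .of_intervalIntegrable (by linarith [hZ.pos]) hint

theorem hasPrincipalValue_re_cauchyKernel_mul_re (hZ : IsRegularJordanCurve L Z)
    (hf : LipschitzOver M Z f) (t : ℝ) :
    HasPrincipalValue (fun u => (cauchyKernel Z t (t + u)).re * (f (t + u)).re) (L / 2)
      ((cauchyTransform Z L f t).re + ∫ r in (0 : ℝ)..L, (cauchyKernel Z t r).im * (f r).im) := by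
  have hre := ((hZ.hasPrincipalValue_cauchyKernel_mul hf t).clm_comp Complex.reCLM).add
    (hZ.hasPrincipalValue_im_cauchyKernel_mul
      (Complex.continuous_im.comp (hf.continuous hZ.continuous))
      ((hf.periodic hZ.periodic).comp Complex.im) t)
  convert hre using 2 with u
  · simp [Complex.mul_re]
  · rfl
  · rfl

theorem im_cauchyTransform_ofReal (hZ : IsRegularJordanCurve L Z) {f : ℝ → ℝ}
    (hf : LipschitzOver M Z fun s => (f s : ℂ)) (t : ℝ) :
    (cauchyTransform Z L (fun s => (f s : ℂ)) t).im
      = ∫ r in (0 : ℝ)..L, (cauchyKernel Z t r).im * f r := by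
  have him := (hZ.hasPrincipalValue_cauchyKernel_mul hf t).clm_comp Complex.imCLM
  simp only [Complex.imCLM_apply, Complex.im_mul_ofReal] at him
  exact him.unique (hZ.hasPrincipalValue_im_cauchyKernel_mul
    (Complex.continuous_re.comp (hf.continuous hZ.continuous))
    ((hf.periodic hZ.periodic).comp Complex.re) t)

end IsRegularJordanCurve

end RealParts

section PlaneCurve

variable {L : ℝ} {γ : ℝ → ℝ × ℝ} {M : ℝ≥0}

/-- The kernel of the boundary Hilbert transform of the plane curve `γ`. -/
def hilbertKernel (γ : ℝ → ℝ × ℝ) (t r : ℝ) : ℝ :=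
  dot2 (γ t - γ r) (tang γ r) / (π * dot2 (γ t - γ r) (γ t - γ r))

/-- The plane curve `γ` as a curve in the complex plane. -/
def complexCurve (γ : ℝ → ℝ × ℝ) (s : ℝ) : ℂ := Complex.equivRealProdCLM.symm (γ s)

theorem deriv_complexCurve (hγ : Differentiable ℝ γ) (s : ℝ) :
    deriv (complexCurve γ) s = Complex.equivRealProdCLM.symm (deriv γ s) :=
  (Complex.equivRealProdCLM.symm.hasFDerivAt.comp_hasDerivAt s (hγ s).hasDerivAt).deriv

theorem hilbertKernel_eq_re_cauchyKernel (hγ : Differentiable ℝ γ) (t r : ℝ) :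
    hilbertKernel γ t r = π⁻¹ * (cauchyKernel (complexCurve γ) t r).re := by
  rw [hilbertKernel, cauchyKernel, deriv_complexCurve hγ, Complex.div_re, Complex.normSq_apply]
  simp only [complexCurve, dot2, tang, Complex.equivRealProdCLM_symm_apply_re,
    Complex.equivRealProdCLM_symm_apply_im, Complex.sub_re, Complex.sub_im, Prod.fst_sub,
    Prod.snd_sub]
  rw [div_mul_eq_div_div, ← add_div]
  ring

theorem Dop_eq_integral_im_cauchyKernel (hγ : Differentiable ℝ γ) (g : ℝ → ℝ) (t : ℝ) :
    Dop γ L g t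
      = (2 * π)⁻¹ * ∫ r in (0 : ℝ)..L, (cauchyKernel (complexCurve γ) t r).im * g r := by
  have hker (r : ℝ) : dot2 (γ t - γ r) (nor γ r) / (2 * π * dot2 (γ t - γ r) (γ t - γ r))
      = (2 * π)⁻¹ * (cauchyKernel (complexCurve γ) t r).im := by
    rw [cauchyKernel, deriv_complexCurve hγ, Complex.div_im, Complex.normSq_apply]
    simp only [complexCurve, dot2, nor, Complex.equivRealProdCLM_symm_apply_re,
      Complex.equivRealProdCLM_symm_apply_im, Complex.sub_re, Complex.sub_im, Prod.fst_sub,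
      Prod.snd_sub]
    rw [div_mul_eq_div_div, ← sub_div]
    ring
  simp only [Dop, hker]
  simp only [mul_assoc (2 * π)⁻¹, intervalIntegral.integral_const_mul]

theorem isRegularJordanCurve_complexCurve (hL : 0 < L) (hγ : IsPeriodicC11 L γ)
    (hinj : Set.InjOn γ (Set.Ico 0 L)) (hreg : ∀ s, deriv γ s ≠ 0) :
    IsRegularJordanCurve L (complexCurve γ) where
  toIsPeriodicC11 := hγ.clm_comp (Complex.equivRealProdCLM.symm : ℝ × ℝ →L[ℝ] ℂ)
  pos := hL
  deriv_ne_zero s := by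
    rw [deriv_complexCurve hγ.differentiable]
    simpa using hreg s
  injOn := Complex.equivRealProdCLM.symm.injective.comp_injOn hinj

theorem hasPrincipalValue_hilbertKernel_mul_re (hγ : Differentiable ℝ γ)
    (hZ : IsRegularJordanCurve L (complexCurve γ)) {F : ℝ → ℂ}
    (hF : LipschitzOver M (complexCurve γ) F) (t : ℝ) :
    HasPrincipalValue (fun u => hilbertKernel γ t (t + u) * (F (t + u)).re) (L / 2)
      (π⁻¹ * ((cauchyTransform (complexCurve γ) L F t).re
        + ∫ r in (0 : ℝ)..L, (cauchyKernel (complexCurve γ) t r).im * (F r).im)) := by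
  simp only [hilbertKernel_eq_re_cauchyKernel hγ, mul_assoc]
  exact (hZ.hasPrincipalValue_re_cauchyKernel_mul_re hF t).const_mul π⁻¹

theorem Dop_eq_im_cauchyTransform (hγ : Differentiable ℝ γ)
    (hZ : IsRegularJordanCurve L (complexCurve γ)) {f : ℝ → ℝ}
    (hf : LipschitzOver M (complexCurve γ) fun s => (f s : ℂ)) (t : ℝ) :
    Dop γ L f t
      = (2 * π)⁻¹ * (cauchyTransform (complexCurve γ) L (fun s => (f s : ℂ)) t).im := by
  rw [Dop_eq_integral_im_cauchyKernel hγ, hZ.im_cauchyTransform_ofReal hf]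

theorem integral_im_cauchyKernel_mul_im_cauchyTransform (hγ : Differentiable ℝ γ)
    (hZ : IsRegularJordanCurve L (complexCurve γ)) {f : ℝ → ℝ}
    (hf : LipschitzOver M (complexCurve γ) fun s => (f s : ℂ)) (t : ℝ) :
    ∫ r in (0 : ℝ)..L, (cauchyKernel (complexCurve γ) t r).im
        * (cauchyTransform (complexCurve γ) L (fun s => (f s : ℂ)) r).im
      = 4 * π ^ 2 * Dop γ L (Dop γ L f) t := by
  simp only [Dop_eq_integral_im_cauchyKernel hγ _ t, Dop_eq_im_cauchyTransform hγ hZ hf,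
    mul_left_comm _ (2 * π)⁻¹, intervalIntegral.integral_const_mul]
  field_simp
  ring

theorem stmt11_general {f : ℝ → ℝ} (hL : 0 < L) (hγ : IsPeriodicC11 L γ)
    (hinj : Set.InjOn γ (Set.Ico 0 L)) (hreg : ∀ s, deriv γ s ≠ 0) (hf : IsPeriodicC11 L f) :
    ∃ Hf : ℝ → ℝ,
      (∀ t, HasPrincipalValue (fun u => hilbertKernel γ t (t + u) * f (t + u)) (L / 2) (Hf t)) ∧
      Continuous Hf ∧ Function.Periodic Hf L ∧
      ∀ t, HasPrincipalValue (fun u => hilbertKernel γ t (t + u) * Hf (t + u)) (L / 2)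
        (-f t + 4 * Dop γ L (Dop γ L f) t) := by
  have hZ := isRegularJordanCurve_complexCurve hL hγ hinj hreg
  have hfC : IsPeriodicC11 L fun s => (f s : ℂ) := hf.clm_comp Complex.ofRealCLM
  obtain ⟨M, hM⟩ := hfC.exists_lipschitzOver hZ
  obtain ⟨N, hN⟩ := hZ.exists_lipschitzOver_cauchyTransform hfC
  have hpv {K : ℝ≥0} {F : ℝ → ℂ} (hF : LipschitzOver K (complexCurve γ) F) :=
    hasPrincipalValue_hilbertKernel_mul_re hγ.differentiable hZ hF
  refine ⟨fun t => π⁻¹ * (cauchyTransform (complexCurve γ) L (fun s => (f s : ℂ)) t).re,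
    fun t => by simpa using hpv hM t,
    continuous_const.mul (Complex.continuous_re.comp (hN.continuous hZ.continuous)),
    (hN.periodic hZ.periodic).comp fun z => π⁻¹ * z.re, fun t => ?_⟩
  have hvalue : -f t + 4 * Dop γ L (Dop γ L f) t
      = π⁻¹ * (π⁻¹ * (-π ^ 2 * f t + 4 * π ^ 2 * Dop γ L (Dop γ L f) t)) := by
    field_simp
  have hsq : (-(π : ℂ) ^ 2 * f t).re = -π ^ 2 * f t := by norm_cast
  have hHH := (hpv hN t).const_mul π⁻¹
  rw [hZ.cauchyTransform_cauchyTransform hfC t, hsq,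
    integral_im_cauchyKernel_mul_im_cauchyTransform hγ.differentiable hZ hM, ← hvalue] at hHH
  simpa only [mul_left_comm _ π⁻¹] using hHH

end PlaneCurve

theorem stmt11 (L : ℝ) (hL : 0 < L) (γ : ℝ → ℝ × ℝ)
    (hγ : ContDiff ℝ (⊤ : ℕ∞) γ)
    (hper : ∀ s, γ (s + L) = γ s)
    (hinj : Set.InjOn γ (Set.Ico 0 L))
    (harc : ∀ s, dot2 (deriv γ s) (deriv γ s) = 1)
    (f : ℝ → ℝ) (hf : ContDiff ℝ (⊤ : ℕ∞) f) (hfper : ∀ s, f (s + L) = f s)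
    (t : ℝ) :
    ∃ Hf : ℝ → ℝ,
      (∀ t' : ℝ,
        Tendsto
          (fun ε : ℝ =>
            ∫ u in {u : ℝ | ε ≤ |u| ∧ |u| ≤ L / 2},
              dot2 (γ t' - γ (t' + u)) (tang γ (t' + u))
                / (π * dot2 (γ t' - γ (t' + u)) (γ t' - γ (t' + u))) * f (t' + u))
          (𝓝[>] (0 : ℝ)) (𝓝 (Hf t'))) ∧
      Continuous Hf ∧ (∀ t' : ℝ, Hf (t' + L) = Hf t') ∧
      ∃ HHft : ℝ,
        Tendsto
          (fun ε : ℝ =>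
            ∫ u in {u : ℝ | ε ≤ |u| ∧ |u| ≤ L / 2},
              dot2 (γ t - γ (t + u)) (tang γ (t + u))
                / (π * dot2 (γ t - γ (t + u)) (γ t - γ (t + u))) * Hf (t + u))
          (𝓝[>] (0 : ℝ)) (𝓝 HHft) ∧
        1 / 4 * HHft = -(1 / 4) * f t + Dop γ L (Dop γ L f) t := by
  have hreg (s : ℝ) : deriv γ s ≠ 0 := fun hs => by simpa [hs, dot2] using harc s
  obtain ⟨Hf, hH, hcont, hperiodic, hHH⟩ := stmt11_general hL
    (.of_contDiff hL.ne' (mod_cast contDiff_infty.1 hγ 2) hper) hinj hreg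
    (.of_contDiff hL.ne' (mod_cast contDiff_infty.1 hf 2) hfper)
  exact ⟨Hf, fun t' => (hH t').2, hcont, hperiodic, _, (hHH t).2, by ring⟩
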